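/- Let K be a field, R a K-module, and let M_{1q} : R ⊗ R^{⊗q} → R (q ≥ 1) be a family of K-multilinear operations; extend the family by M_{00} = 0, M_{10} = M_{01} = id_R, M_{0q} = 0 for q ≥ 2, and M_{pq} = 0 for all p ≥ 2. Write {x; y₁,…,y_q} := M_{1q}(x; y₁⊗…⊗y_q) and {x; } := x. Then the extended family satisfies all the multibrace relations (R_{ijk}) for i,j,k ≥ 1 if and only if the brace relations hold: for all n, m ≥ 1 and x, y₁,…,y_n, z₁,…,z_m ∈ R, { {x; y₁,…,y_n}; z₁,…,z_m } = Σ {x; z₁,…,z_{p₁}, {y₁; z_{p₁+1},…,z_{q₁}}, z_{q₁+1},…,z_{p₂}, {y₂; z_{p₂+1},…,z_{q₂}}, …, {y_n; z_{p_n+1},…,z_{q_n}}, z_{q_n+1},…,z_m }, the sum running over all sequences of integers 0 ≤ p₁ ≤ q₁ ≤ p₂ ≤ q₂ ≤ … ≤ p_n ≤ q_n ≤ m. -/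

import Mathlib

open Finset

/-- The set of pairs of sequences `(i₁,…,i_k)`, `(j₁,…,j_k)` of nonnegative integers with
`i₁+⋯+i_k = p`, `j₁+⋯+j_k = q` and `i_t + j_t ≥ 1` for all `t`, encoded as functions
`Fin k → ℕ × ℕ`. -/
def Comps (k p q : ℕ) : Finset (Fin k → ℕ × ℕ) :=
  (Fintype.piFinset fun _ : Fin k => Finset.range (p + 1) ×ˢ Finset.range (q + 1)).filter
    fun c => (∑ t, (c t).1) = p ∧ (∑ t, (c t).2) = q ∧ ∀ t, 1 ≤ (c t).1 + (c t).2

/-- Offset of the `t`-th consecutive block in the first family of variables. -/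
def off1 {k : ℕ} (c : Fin k → ℕ × ℕ) (t : Fin k) : ℕ :=
  ∑ u ∈ Finset.univ.filter (fun u => u < t), (c u).1

/-- Offset of the `t`-th consecutive block in the second family of variables. -/
def off2 {k : ℕ} (c : Fin k → ℕ × ℕ) (t : Fin k) : ℕ :=
  ∑ u ∈ Finset.univ.filter (fun u => u < t), (c u).2

section Ops
variable {A : Type*} [AddCommGroup A]

/-- `M_{i_t j_t}(x^t; y^t)`: the operation `M` applied to the `t`-th consecutive blocks of
the sequences `x` and `y`, as prescribed by the composition `c`. -/
def blockVal (M : ∀ p q : ℕ, (Fin p → A) → (Fin q → A) → A)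
    {k : ℕ} (c : Fin k → ℕ × ℕ) (x y : ℕ → A) (t : Fin k) : A :=
  M (c t).1 (c t).2 (fun s => x (off1 c t + s.1)) (fun s => y (off2 c t + s.1))

/-- The multibrace relation `(R_{ijk})`. -/
def Rrel (M : ∀ p q : ℕ, (Fin p → A) → (Fin q → A) → A)
    (i j k : ℕ) (x y z : ℕ → A) : Prop :=
  ∑ l ∈ Finset.Icc 1 (i + j), ∑ c ∈ Comps l i j,
      M l k (fun t : Fin l => blockVal M c x y t) (fun s : Fin k => z s.1)
    = ∑ m ∈ Finset.Icc 1 (j + k), ∑ c ∈ Comps m j k,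
        M i m (fun s : Fin i => x s.1) (fun t : Fin m => blockVal M c y z t)

/-- `ω^≻`: `omegaIter s x n = ((x₀ ≻ x₁) ≻ ⋯) ≻ x_n`. -/
def omegaIter (s : A → A → A) (x : ℕ → A) : ℕ → A
  | 0 => x 0
  | n + 1 => s (omegaIter s x n) (x (n + 1))

end Ops

/-- Extension of a family of brace-type operations `M_{1q}` (`q ≥ 1`) to a full multibrace
family, by `M₀₀ = 0`, `M₁₀ = M₀₁ = id`, `M_{0q} = 0` for `q ≥ 2`, and `M_{pq} = 0` for
`p ≥ 2`. -/
def Mext {V : Type*} [Zero V] (M1 : ∀ q : ℕ, V → (Fin q → V) → V) :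
    ∀ p q : ℕ, (Fin p → V) → (Fin q → V) → V
  | 1, 0, x, _ => x 0
  | 0, 1, _, y => y 0
  | 1, q + 1, x, y => M1 (q + 1) (x 0) y
  | _, _, _, _ => 0

/-- The segment `z_{a+1}, …, z_b` (with `z` `0`-indexed: entries `z a, …, z (b-1)`). -/
def seg {V : Type*} (z : ℕ → V) (a b : ℕ) : List V :=
  (List.range (b - a)).map fun s => z (a + s)

/-- The interleaved argument list
`z₁,…,z_{p₁}, {y₁; z_{p₁+1},…,z_{q₁}}, z_{q₁+1},…,z_{p₂}, …, {y_n; …}, z_{q_n+1},…,z_m`,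
built from the data `(y_i, p_i, q_i)`. -/
def interleave {V : Type*} (M1 : ∀ q : ℕ, V → (Fin q → V) → V) (z : ℕ → V) (m : ℕ) :
    ℕ → List (V × ℕ × ℕ) → List V
  | prev, [] => seg z prev m
  | prev, (a, p, q) :: rest =>
      seg z prev p ++ (M1 (q - p) a (fun s => z (p + s.1)) :: interleave M1 z m q rest)

/-- Sequences `0 ≤ p₁ ≤ q₁ ≤ p₂ ≤ q₂ ≤ ⋯ ≤ p_n ≤ q_n ≤ m`, encoded as functions
`Fin n → ℕ × ℕ`. -/
def Chains (n m : ℕ) : Finset (Fin n → ℕ × ℕ) :=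
  (Fintype.piFinset fun _ : Fin n => Finset.range (m + 1) ×ˢ Finset.range (m + 1)).filter
    fun c => (∀ i, (c i).1 ≤ (c i).2) ∧ (∀ i j : Fin n, i < j → (c i).2 ≤ (c j).1) ∧
      ∀ i, (c i).2 ≤ m

theorem mem_Comps {k p q : ℕ} {c : Fin k → ℕ × ℕ} :
    c ∈ Comps k p q ↔
      (∑ t, (c t).1) = p ∧ (∑ t, (c t).2) = q ∧ ∀ t, 1 ≤ (c t).1 + (c t).2 := by
  simp only [Comps, Finset.mem_filter, Fintype.mem_piFinset, Finset.mem_product,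
    Finset.mem_range, and_iff_right_iff_imp]
  rintro ⟨h1, h2, -⟩ t
  have e1 := Finset.single_le_sum (f := fun t => (c t).1) (fun _ _ => Nat.zero_le _)
    (Finset.mem_univ t)
  have e2 := Finset.single_le_sum (f := fun t => (c t).2) (fun _ _ => Nat.zero_le _)
    (Finset.mem_univ t)
  omega

theorem mem_Chains {n m : ℕ} {c : Fin n → ℕ × ℕ} :
    c ∈ Chains n m ↔
      (∀ i, (c i).1 ≤ (c i).2) ∧ (∀ i j : Fin n, i < j → (c i).2 ≤ (c j).1) ∧
        ∀ i, (c i).2 ≤ m := by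
  simp only [Chains, Finset.mem_filter, Fintype.mem_piFinset, Finset.mem_product,
    Finset.mem_range, and_iff_right_iff_imp]
  rintro ⟨h1, -, h2⟩ t
  have := h1 t
  have := h2 t
  omega

theorem off1_cons_zero {k : ℕ} (a : ℕ × ℕ) (c : Fin k → ℕ × ℕ) :
    off1 (Fin.cons a c : Fin (k + 1) → ℕ × ℕ) 0 = 0 := by
  simp [off1]

theorem off2_cons_zero {k : ℕ} (a : ℕ × ℕ) (c : Fin k → ℕ × ℕ) :
    off2 (Fin.cons a c : Fin (k + 1) → ℕ × ℕ) 0 = 0 := by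
  simp [off2]

theorem off1_cons_succ {k : ℕ} (a : ℕ × ℕ) (c : Fin k → ℕ × ℕ) (t : Fin k) :
    off1 (Fin.cons a c : Fin (k + 1) → ℕ × ℕ) t.succ = a.1 + off1 c t := by
  simp [off1, Finset.sum_filter, Fin.sum_univ_succ]

theorem off2_cons_succ {k : ℕ} (a : ℕ × ℕ) (c : Fin k → ℕ × ℕ) (t : Fin k) :
    off2 (Fin.cons a c : Fin (k + 1) → ℕ × ℕ) t.succ = a.2 + off2 c t := by
  simp [off2, Finset.sum_filter, Fin.sum_univ_succ]

theorem sum_range_succ_of_forall_two_le {V : Type*} [AddCommMonoid V] (n : ℕ) (f : ℕ → V)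
    (h : ∀ a, f (a + 2) = 0) :
    ∑ a ∈ Finset.range (n + 1), f a = f 0 + if 1 ≤ n then f 1 else 0 := by
  cases n with
  | zero => simp
  | succ n => simp [Finset.sum_range_succ', h, add_comm (f 1)]

section BlockSums
variable {V : Type*}

theorem seg_succ (z : ℕ → V) (m : ℕ) :
    seg z 0 (m + 1) = z 0 :: seg (fun s => z (1 + s)) 0 m := by
  simp [seg, List.range_succ_eq_map, add_comm 1, Function.comp_def]

theorem interleave_shift (M1 : ∀ q : ℕ, V → (Fin q → V) → V) (z : ℕ → V) (a m : ℕ)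
    (L : List (V × ℕ × ℕ)) (k : ℕ) :
    interleave M1 z (a + m) (a + k) (L.map fun t => (t.1, a + t.2.1, a + t.2.2)) =
      interleave M1 (fun s => z (a + s)) m k L := by
  induction L generalizing k with
  | nil => simp [interleave, seg, Nat.add_sub_add_left, add_assoc]
  | cons t L ih =>
    obtain ⟨v, p, q⟩ := t
    simp only [List.map_cons, interleave, ih, seg, Nat.add_sub_add_left, add_assoc]
    rw [Nat.add_sub_add_left]

theorem ofFn_blockVal_cons (M : ∀ p q : ℕ, (Fin p → V) → (Fin q → V) → V) {k : ℕ} (a : ℕ × ℕ)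
    (c : Fin k → ℕ × ℕ) (x y : ℕ → V) :
    List.ofFn (blockVal M (Fin.cons a c : Fin (k + 1) → ℕ × ℕ) x y) =
      M a.1 a.2 (fun s => x s) (fun s => y s) ::
        List.ofFn (blockVal M c (fun s => x (a.1 + s)) (fun s => y (a.2 + s))) := by
  rw [List.ofFn_succ]
  congr 1
  · simp only [blockVal, off1_cons_zero, off2_cons_zero, zero_add]
    rfl
  · congr 1
    funext t
    simp only [blockVal, off1_cons_succ, off2_cons_succ, add_assoc]
    rfl

variable [AddCommGroup V]

/-- The sum over `Comps l n m` of a function of the list of block values. -/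
def compSum (M1 : ∀ q : ℕ, V → (Fin q → V) → V) (l n m : ℕ) (y z : ℕ → V) (F : List V → V) : V :=
  ∑ c ∈ Comps l n m, F (List.ofFn (blockVal (Mext M1) c y z))

/-- The sum over `Chains n m` of a function of the interleaved argument list. -/
def chainSum (M1 : ∀ q : ℕ, V → (Fin q → V) → V) (n m : ℕ) (y z : ℕ → V) (F : List V → V) : V :=
  ∑ c ∈ Chains n m, F (interleave M1 z m 0 (List.ofFn fun i : Fin n => (y i.1, c i)))

theorem sum_Comps_succ {W : Type*} [AddCommMonoid W] (l n m : ℕ)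
    (f : (Fin (l + 1) → ℕ × ℕ) → W) :
    ∑ c ∈ Comps (l + 1) n m, f c =
      ∑ a ∈ Finset.range (n + 1), ∑ b ∈ Finset.range (m + 1),
        if 1 ≤ a + b then ∑ c ∈ Comps l (n - a) (m - b), f (Fin.cons (a, b) c) else 0 := by
  rw [← Finset.sum_product', ← Finset.sum_filter, Finset.sum_sigma']
  refine Finset.sum_bij' (fun c _ => ⟨c 0, Fin.tail c⟩) (fun s _ => Fin.cons s.1 s.2)
    ?_ ?_ ?_ ?_ ?_
  · intro c hc
    rw [mem_Comps, Fin.sum_univ_succ, Fin.sum_univ_succ] at hc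
    obtain ⟨h1, h2, h3⟩ := hc
    have := h3 0
    simp only [Finset.mem_sigma, Finset.mem_filter, Finset.mem_product, Finset.mem_range,
      mem_Comps, Fin.tail]
    refine ⟨by omega, by omega, by omega, fun t => h3 _⟩
  · rintro ⟨⟨a, b⟩, c⟩ h
    simp only [Finset.mem_sigma, Finset.mem_filter, Finset.mem_product, Finset.mem_range,
      mem_Comps] at h
    obtain ⟨⟨h1, h2⟩, h3, h4, h5⟩ := h
    rw [mem_Comps, Fin.sum_univ_succ, Fin.sum_univ_succ, Fin.forall_fin_succ]
    simp only [Fin.cons_zero, Fin.cons_succ]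
    exact ⟨by omega, by omega, by omega, h5⟩
  · intro c _
    exact Fin.cons_self_tail c
  · rintro ⟨a, c⟩ _
    simp
  · intro c _
    exact congrArg f (Fin.cons_self_tail c).symm

theorem sum_Chains_succ {W : Type*} [AddCommMonoid W] (n m : ℕ)
    (f : (Fin (n + 1) → ℕ × ℕ) → W) :
    ∑ c ∈ Chains (n + 1) m, f c =
      ∑ p ∈ Finset.range (m + 1), ∑ d ∈ Finset.range (m - p + 1),
        ∑ c ∈ Chains n (m - (p + d)),
          f (Fin.cons (p, p + d) fun i => (p + d + (c i).1, p + d + (c i).2)) := by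
  simp_rw [Finset.sum_sigma']
  refine Finset.sum_bij'
    (fun c _ => ⟨(c 0).1, (c 0).2 - (c 0).1, fun i =>
      ((c i.succ).1 - (c 0).2, (c i.succ).2 - (c 0).2)⟩)
    (fun s _ => Fin.cons (s.1, s.1 + s.2.1)
      fun i => (s.1 + s.2.1 + (s.2.2 i).1, s.1 + s.2.1 + (s.2.2 i).2)) ?_ ?_ ?_ ?_ ?_
  · intro c hc
    obtain ⟨h1, h2, h3⟩ := mem_Chains.1 hc
    have e1 := h1 0
    have e3 := h3 0
    simp only [Finset.mem_sigma, Finset.mem_range, mem_Chains]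
    refine ⟨by omega, by omega, fun i => ?_, fun i j hij => ?_, fun i => ?_⟩
    · have := h1 i.succ
      omega
    · have := h2 i.succ j.succ (by simpa using hij)
      omega
    · have := h3 i.succ
      omega
  · rintro ⟨p, d, c⟩ h
    simp only [Finset.mem_sigma, Finset.mem_range, mem_Chains] at h
    obtain ⟨hp, hd, h1, h2, h3⟩ := h
    simp only [mem_Chains, Fin.forall_fin_succ, Fin.cons_zero, Fin.cons_succ]
    refine ⟨⟨by omega, fun i => ?_⟩,
      ⟨⟨by simp, fun i _ => by omega⟩, fun i => ⟨by simp, fun j hij => ?_⟩⟩,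
      by omega, fun i => ?_⟩
    · have := h1 i
      omega
    · have := h2 i j (by simpa using hij)
      omega
    · have := h3 i
      omega
  · intro c hc
    obtain ⟨h1, h2, -⟩ := mem_Chains.1 hc
    have e1 := h1 0
    funext i
    refine Fin.cases ?_ (fun i => ?_) i
    · ext <;> simp only [Fin.cons_zero]
      omega
    · have e2 := h2 0 i.succ (Fin.succ_pos i)
      have e3 := h1 i.succ
      ext <;> simp only [Fin.cons_succ] <;> omega
  · rintro ⟨p, d, c⟩ _
    simp
  · intro c hc
    obtain ⟨h1, h2, -⟩ := mem_Chains.1 hc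
    have e1 := h1 0
    congr 1
    funext i
    refine Fin.cases ?_ (fun i => ?_) i
    · ext <;> simp only [Fin.cons_zero]
      omega
    · have e2 := h2 0 i.succ (Fin.succ_pos i)
      have e3 := h1 i.succ
      ext <;> simp only [Fin.cons_succ] <;> omega

theorem Mext_one (M1 : ∀ q : ℕ, V → (Fin q → V) → V)
    (hM10 : ∀ (a : V) (y : Fin 0 → V), M1 0 a y = a) (q : ℕ) (x : Fin 1 → V) (y : Fin q → V) :
    Mext M1 1 q x y = M1 q (x 0) y := by
  cases q with
  | zero => simp [Mext, hM10]
  | succ q => rfl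

theorem Mext_of_two_le (M1 : ∀ q : ℕ, V → (Fin q → V) → V) {p : ℕ} (hp : 2 ≤ p) (q : ℕ)
    (x : Fin p → V) (y : Fin q → V) : Mext M1 p q x y = 0 := by
  obtain ⟨p, rfl⟩ := Nat.exists_eq_add_of_le' hp
  rfl

theorem compSum_zero (M1 : ∀ q : ℕ, V → (Fin q → V) → V) (n m : ℕ) (y z : ℕ → V)
    (F : List V → V) :
    compSum M1 0 n m y z F = if n = 0 ∧ m = 0 then F [] else 0 := by
  have : Comps 0 n m = if n = 0 ∧ m = 0 then Finset.univ else ∅ := by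
    ext c
    split_ifs with h
    · simp [mem_Comps, h, eq_iff_true_of_subsingleton]
    · simp only [mem_Comps, Finset.univ_eq_empty, Finset.sum_empty]
      simp
      omega
  rw [compSum, this]
  split_ifs <;> simp

theorem compSum_succ (M1 : ∀ q : ℕ, V → (Fin q → V) → V)
    (hM10 : ∀ (a : V) (y : Fin 0 → V), M1 0 a y = a) (l n m : ℕ) (y z : ℕ → V)
    {F : List V → V} (hF : ∀ L, (0 : V) ∈ L → F L = 0) :
    compSum M1 (l + 1) n m y z F =
      (if 1 ≤ m then compSum M1 l n (m - 1) y (fun s => z (1 + s)) (fun L => F (z 0 :: L))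
        else 0) +
      if 1 ≤ n then ∑ b ∈ Finset.range (m + 1),
        compSum M1 l (n - 1) (m - b) (fun s => y (1 + s)) (fun s => z (b + s))
          (fun L => F (M1 b (y 0) (fun s => z s) :: L)) else 0 := by
  have hF0 : ∀ L, F (0 :: L) = 0 := fun L => hF _ (by simp)
  rw [compSum, sum_Comps_succ, sum_range_succ_of_forall_two_le]
  · congr 1
    · rw [sum_range_succ_of_forall_two_le]
      · simp only [ofFn_blockVal_cons, compSum]
        simp [Mext]
      · intro b
        simp only [ofFn_blockVal_cons, Mext, hF0, Finset.sum_const_zero, ite_self]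
    · simp only [ofFn_blockVal_cons, compSum, Mext_one M1 hM10]
      simp
  · intro a
    simp only [ofFn_blockVal_cons, Mext, hF0, Finset.sum_const_zero, ite_self]

theorem chainSum_zero (M1 : ∀ q : ℕ, V → (Fin q → V) → V) (m : ℕ) (y z : ℕ → V)
    (F : List V → V) : chainSum M1 0 m y z F = F (seg z 0 m) := by
  have : Chains 0 m = Finset.univ := by
    ext c
    simp [mem_Chains, eq_iff_true_of_subsingleton]
  simp [chainSum, this, interleave]

theorem chainSum_succ_eq_sum (M1 : ∀ q : ℕ, V → (Fin q → V) → V) (n m : ℕ) (y z : ℕ → V)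
    (F : List V → V) :
    chainSum M1 (n + 1) m y z F =
      ∑ p ∈ Finset.range (m + 1), ∑ d ∈ Finset.range (m - p + 1),
        chainSum M1 n (m - (p + d)) (fun s => y (1 + s)) (fun s => z (p + d + s))
          (fun L => F (seg z 0 p ++ M1 d (y 0) (fun s => z (p + s)) :: L)) := by
  rw [chainSum, sum_Chains_succ]
  refine Finset.sum_congr rfl fun p hp => Finset.sum_congr rfl fun d hd => ?_
  refine Finset.sum_congr rfl fun c hc => ?_
  rw [Finset.mem_range] at hp hd
  have h := interleave_shift M1 z (p + d) (m - (p + d))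
    (List.ofFn fun i : Fin n => (y (1 + i.1), c i)) 0
  rw [Nat.add_sub_cancel' (by omega), add_zero, List.map_ofFn] at h
  rw [← h]
  simp only [List.ofFn_succ, interleave, Fin.cons_zero, Fin.cons_succ, Fin.val_zero,
    Fin.val_succ, Function.comp_def, add_comm 1]
  rw [Nat.add_sub_cancel_left]

theorem chainSum_rec (M1 : ∀ q : ℕ, V → (Fin q → V) → V) (n m : ℕ) (y z : ℕ → V)
    (F : List V → V) :
    chainSum M1 n m y z F =
      (if n = 0 ∧ m = 0 then F [] else 0) +
      ((if 1 ≤ m then chainSum M1 n (m - 1) y (fun s => z (1 + s)) (fun L => F (z 0 :: L))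
        else 0) +
      if 1 ≤ n then ∑ b ∈ Finset.range (m + 1),
        chainSum M1 (n - 1) (m - b) (fun s => y (1 + s)) (fun s => z (b + s))
          (fun L => F (M1 b (y 0) (fun s => z s) :: L)) else 0) := by
  cases n with
  | zero =>
    cases m with
    | zero => simp [chainSum_zero, seg]
    | succ m => simp [chainSum_zero, seg_succ]
  | succ n =>
    rw [chainSum_succ_eq_sum, Finset.sum_range_succ']
    rw [if_neg (by omega), zero_add]
    congr 1
    · cases m with
      | zero => simp
      | succ m =>
        rw [if_pos (by omega), Nat.add_sub_cancel, chainSum_succ_eq_sum]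
        refine Finset.sum_congr rfl fun p _ => ?_
        rw [Nat.add_sub_add_right]
        refine Finset.sum_congr rfl fun d _ => ?_
        rw [show m + 1 - (p + 1 + d) = m - (p + d) by omega]
        simp only [seg_succ, List.cons_append]
        simp only [add_comm p 1, add_assoc]
    · simp [seg]

theorem sum_compSum_eq_chainSum (M1 : ∀ q : ℕ, V → (Fin q → V) → V)
    (hM10 : ∀ (a : V) (y : Fin 0 → V), M1 0 a y = a) (N n m : ℕ) (hN : n + m < N) (y z : ℕ → V)
    {F : List V → V} (hF : ∀ L, (0 : V) ∈ L → F L = 0) :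
    ∑ l ∈ Finset.range N, compSum M1 l n m y z F = chainSum M1 n m y z F := by
  induction N generalizing n m y z F with
  | zero => omega
  | succ N ih =>
    have hcons : ∀ v L, (0 : V) ∈ L → F (v :: L) = 0 :=
      fun v L hL => hF _ (List.mem_cons_of_mem v hL)
    rw [Finset.sum_range_succ', chainSum_rec, compSum_zero, add_comm]
    simp only [compSum_succ M1 hM10 _ _ _ _ _ hF, Finset.sum_add_distrib]
    congr 2
    · split_ifs with h
      · exact ih _ _ (by omega) _ _ (hcons _)
      · simp
    · split_ifs with h
      · rw [Finset.sum_comm]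
        exact Finset.sum_congr rfl fun b _ => ih _ _ (by omega) _ _ (hcons _)
      · simp

end BlockSums

/-- A family of multilinear operations `M_{1q}` (`q ≥ 1`), extended by
`M₀₀ = 0`, `M₁₀ = M₀₁ = id`, `M_{0q} = 0` (`q ≥ 2`) and `M_{pq} = 0` (`p ≥ 2`), satisfies
all the multibrace relations `(R_{ijk})` if and only if it satisfies the brace relations:
a multibrace algebra with `M_{pq} = 0` for `p ≥ 2` is the same thing as a brace algebra. -/
theorem multibrace_vanishing_iff_brace (K V : Type*) [Field K] [AddCommGroup V] [Module K V]
    (M1 : ∀ q : ℕ, V → (Fin q → V) → V)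
    (hM10 : ∀ (a : V) (y : Fin 0 → V), M1 0 a y = a)
    (h_add1 : ∀ (q : ℕ) (a a' : V) (y : Fin q → V),
      M1 q (a + a') y = M1 q a y + M1 q a' y)
    (h_smul1 : ∀ (q : ℕ) (r : K) (a : V) (y : Fin q → V),
      M1 q (r • a) y = r • M1 q a y)
    (h_add2 : ∀ (q : ℕ) (a : V) (y : Fin q → V) (i : Fin q) (v w : V),
      M1 q a (Function.update y i (v + w))
        = M1 q a (Function.update y i v) + M1 q a (Function.update y i w))
    (h_smul2 : ∀ (q : ℕ) (a : V) (y : Fin q → V) (i : Fin q) (r : K) (v : V),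
      M1 q a (Function.update y i (r • v)) = r • M1 q a (Function.update y i v)) :
    (∀ i j k : ℕ, 1 ≤ i → 1 ≤ j → 1 ≤ k → ∀ x y z : ℕ → V, Rrel (Mext M1) i j k x y z)
    ↔
    (∀ n m : ℕ, 1 ≤ n → 1 ≤ m → ∀ (x : V) (y z : ℕ → V),
      M1 m (M1 n x (fun i : Fin n => y i.1)) (fun j : Fin m => z j.1)
        = ∑ c ∈ Chains n m,
            M1 (interleave M1 z m 0 (List.ofFn fun i : Fin n => (y i.1, c i))).length x
              (fun t =>
                (interleave M1 z m 0 (List.ofFn fun i : Fin n => (y i.1, c i))).get t)) := by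
  have hzero1 : ∀ (q : ℕ) (y : Fin q → V), M1 q 0 y = 0 := fun q y => by
    simpa using h_smul1 q 0 0 y
  have hzero2 : ∀ (q : ℕ) (a : V) (y : Fin q → V) (i : Fin q), y i = 0 → M1 q a y = 0 := by
    intro q a y i hi
    have h := h_smul2 q a y i 0 0
    rwa [zero_smul, zero_smul, Function.update_eq_self_iff.2 hi.symm] at h
  have hcast : ∀ (l : ℕ) (x : V) (f : Fin l → V),
      M1 (List.ofFn f).length x (fun t => (List.ofFn f).get t) = M1 l x f := by
    intro l x f
    have h : ∀ (L : List V) (hl : L.length = l),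
        M1 L.length x (fun t => L.get t) = M1 l x (fun t => L.get (t.cast hl.symm)) := by
      rintro L rfl
      rfl
    rw [h _ (List.length_ofFn)]
    simp
  have hleft : ∀ i j k : ℕ, 1 ≤ i → 1 ≤ k → ∀ x y z : ℕ → V,
      ∑ l ∈ Finset.Icc 1 (i + j), ∑ c ∈ Comps l i j,
        Mext M1 l k (fun t : Fin l => blockVal (Mext M1) c x y t) (fun s : Fin k => z s.1) =
      M1 k (Mext M1 i j (fun s => x s) (fun s => y s)) (fun s => z s) := by
    intro i j k hi hk x y z
    rw [Finset.sum_eq_single_of_mem 1 (by simp; omega)]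
    · have h1 : Comps 1 i j = {fun _ => (i, j)} := by
        ext c
        rw [mem_Comps, Finset.mem_singleton, funext_iff]
        simp [Prod.ext_iff]
        omega
      simp [h1, Mext_one M1 hM10, blockVal, off1, off2]
    · intro l hl h1
      rw [Finset.mem_Icc] at hl
      exact Finset.sum_eq_zero fun c _ => Mext_of_two_le M1 (by omega) _ _ _
  have hright : ∀ n m : ℕ, 1 ≤ n → ∀ (x : V) (y z : ℕ → V),
      ∑ l ∈ Finset.Icc 1 (n + m), ∑ c ∈ Comps l n m,
        M1 l x (fun t : Fin l => blockVal (Mext M1) c y z t) =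
      ∑ c ∈ Chains n m,
        M1 (interleave M1 z m 0 (List.ofFn fun i : Fin n => (y i.1, c i))).length x
          (fun t => (interleave M1 z m 0 (List.ofFn fun i : Fin n => (y i.1, c i))).get t) := by
    intro n m hn x y z
    have h := sum_compSum_eq_chainSum M1 hM10 (n + m + 1) n m (by omega) y z
      (F := fun L => M1 L.length x (fun t => L.get t)) (by
        intro L hL
        obtain ⟨i, hi⟩ := List.get_of_mem hL
        exact hzero2 _ _ _ i hi)
    rw [chainSum] at h
    rw [← h, Finset.sum_range_succ', compSum_zero, if_neg (by omega), add_zero,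
      Finset.range_eq_Ico, Finset.sum_Ico_add' (fun l => compSum M1 l n m y z _),
      Finset.Ico_add_one_right_eq_Icc]
    simp only [compSum, hcast]
  have hone : ∀ j k : ℕ, 1 ≤ j → 1 ≤ k → ∀ x y z : ℕ → V,
      Rrel (Mext M1) 1 j k x y z ↔
        M1 k (M1 j (x 0) (fun i : Fin j => y i.1)) (fun s : Fin k => z s.1)
        = ∑ c ∈ Chains j k,
            M1 (interleave M1 z k 0 (List.ofFn fun i : Fin j => (y i.1, c i))).length (x 0)
              (fun t =>
                (interleave M1 z k 0 (List.ofFn fun i : Fin j => (y i.1, c i))).get t) := by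
    intro j k hj hk x y z
    rw [Rrel, hleft 1 j k le_rfl hk]
    simp only [Mext_one M1 hM10]
    rw [← hright j k hj]
    rfl
  constructor
  · intro h n m hn hm x y z
    exact (hone n m hn hm (fun _ => x) y z).1 (h 1 n m le_rfl hn hm _ y z)
  · intro h i j k hi hj hk x y z
    obtain rfl | hi2 := hi.eq_or_lt
    · exact (hone j k hj hk x y z).2 (h j k hj hk (x 0) y z)
    · rw [Rrel, hleft i j k hi hk, Mext_of_two_le M1 hi2, hzero1]
      exact (Finset.sum_eq_zero fun m _ => Finset.sum_eq_zero fun c _ =>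
        Mext_of_two_le M1 hi2 _ _ _).symm
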